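/- For every positive integer n, the number of partitions of n with nonnegative crank is equal to the number of partitions of n with odd mex. -/

import Mathlib

/-- The number of parts equal to 1 in the partition `π`. -/
def partitionOmega {n : ℕ} (π : n.Partition) : ℕ := π.parts.count 1

/-- The number of parts of `π` strictly greater than the number of ones in `π`. -/
def partitionEta {n : ℕ} (π : n.Partition) : ℕ :=
  (π.parts.filter (fun p => partitionOmega π < p)).card

/-- The crank of a partition: the largest part if there are no ones,
and `η(π) - ω(π)` otherwise. -/
def partitionCrank {n : ℕ} (π : n.Partition) : ℤ :=
  if partitionOmega π = 0 then (π.parts.sup : ℤ)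
  else (partitionEta π : ℤ) - (partitionOmega π : ℤ)

/-- The mex of a partition: the least positive integer not occurring as a part. -/
noncomputable def partitionMex {n : ℕ} (π : n.Partition) : ℕ :=
  sInf {k : ℕ | 0 < k ∧ k ∉ π.parts}

/-!
Call `i` a `k`-fixed point of a partition `s₁ ≥ s₂ ≥ ⋯` if `sᵢ = i + k`. Deleting the part `sᵢ` at
a `k`-fixed point and adding one to each of the `i - 1` parts before it is a bijection from the
partitions of `n` with a `k`-fixed point to the partitions of `n - (k + 1)` without a
`(k + 1)`-fixed point. Deleting a part `k + 1` is in the same way a bijection from the partitions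
with `mexₖ + k` even to those of `n - (k + 1)` with `mexₖ₊₁ + (k + 1)` odd, where `mexₖ` is the
least integer above `k` that is not a part. The recursion common to both families determines the
counts.

Let `d` be the number of parts exceeding `d + k` in a partition without a `k`-fixed point. Trading
ones, `d + k + 1` at a time, for parts `d + k + 1` preserves the largest `d` with at least `d` parts
exceeding `d + k`, and leaves at most `d + k` ones, which says precisely that the crank is at
least `-k`.
-/

open Multiset

section PartitionCount

/-- The multisets of parts of the partitions of the integer `z`. Allowing `z < 0`, where there are
none, spares recursions in `z` their boundary cases. -/
def partitionsOf (z : ℤ) : Set (Multiset ℕ) := {s | 0 ∉ s ∧ (s.sum : ℤ) = z}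

/-- The number of partitions of `z` whose multiset of parts lies in `S`. -/
noncomputable def partitionCount (S : Set (Multiset ℕ)) (z : ℤ) : ℕ := (S ∩ partitionsOf z).ncard

theorem partitionsOf_of_neg {z : ℤ} (hz : z < 0) : partitionsOf z = ∅ :=
  Set.eq_empty_of_forall_notMem fun s hs => by have := hs.2; omega

theorem bijOn_parts (n : ℕ) :
    Set.BijOn Nat.Partition.parts (Set.univ : Set n.Partition) (partitionsOf n) := by
  refine ⟨fun π _ => ⟨fun h => (π.parts_pos h).ne' rfl, by rw [π.parts_sum]⟩,
    fun π _ ρ _ => Nat.Partition.ext, fun s hs => ?_⟩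
  exact ⟨⟨s, fun {i} hi => Nat.pos_of_ne_zero fun h => hs.1 (h ▸ hi), by exact_mod_cast hs.2⟩,
    trivial, rfl⟩

theorem card_filter_parts (n : ℕ) (p : Multiset ℕ → Prop)
    [DecidablePred fun π : n.Partition => p π.parts] :
    (Finset.univ.filter fun π : n.Partition => p π.parts).card = partitionCount {s | p s} n := by
  have hbij := (bijOn_parts n).subset_right (Set.inter_subset_right (s := {s | p s}))
  rw [partitionCount, ← hbij.ncard_eq, ← Set.ncard_coe_finset]
  congr 1
  ext π
  simp [(bijOn_parts n).mapsTo (Set.mem_univ π)]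

theorem finite_partitionsOf (z : ℤ) : (partitionsOf z).Finite := by
  rcases lt_or_ge z 0 with hz | hz
  · rw [partitionsOf_of_neg hz]
    exact Set.finite_empty
  · lift z to ℕ using hz
    exact (bijOn_parts z).image_eq ▸ Set.toFinite _

theorem partitionCount_of_neg (S : Set (Multiset ℕ)) {z : ℤ} (hz : z < 0) :
    partitionCount S z = 0 := by
  rw [partitionCount, partitionsOf_of_neg hz, Set.inter_empty, Set.ncard_empty]

theorem partitionCount_add_compl (S : Set (Multiset ℕ)) (z : ℤ) :
    partitionCount S z + partitionCount Sᶜ z = (partitionsOf z).ncard := by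
  rw [partitionCount, partitionCount, Set.inter_comm S, Set.inter_comm Sᶜ, ← Set.sdiff_eq]
  exact Set.ncard_inter_add_ncard_sdiff_eq_ncard _ _ (finite_partitionsOf z)

theorem partitionCount_eq_of_bijOn {ι : Type*} {X : Set ι} {S T : Set (Multiset ℕ)}
    {f g : ι → Multiset ℕ} (hf : Set.BijOn f X S) (hg : Set.BijOn g X T) (m : ℕ)
    (hsum : ∀ x ∈ X, (f x).sum = (g x).sum + m) (hzero : ∀ x ∈ X, 0 ∈ f x ↔ 0 ∈ g x) (z : ℤ) :
    partitionCount S z = partitionCount T (z - m) := by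
  rw [partitionCount, partitionCount, ← (hf.subset_right Set.inter_subset_left).ncard_eq,
    ← (hg.subset_right Set.inter_subset_left).ncard_eq]
  congr 1
  ext x
  refine and_congr_right fun hx => ?_
  simp only [Set.mem_preimage, Set.mem_inter_iff, hf.mapsTo hx, hg.mapsTo hx, partitionsOf,
    Set.mem_ofPred_eq, hzero x hx, hsum x hx, Nat.cast_add, eq_sub_iff_add_eq]

/-- The recursion satisfied both by the partitions without a `k`-fixed point and by those whose mex
above `k` has the parity of `k + 1`: as many partitions of `z` lie outside `P k` as partitions of
`z - (k + 1)` lie in `P (k + 1)`. -/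
def IsStaircase (P : ℕ → Set (Multiset ℕ)) : Prop :=
  ∀ (k : ℕ) (z : ℤ), partitionCount (P k)ᶜ z = partitionCount (P (k + 1)) (z - (k + 1 : ℕ))

theorem IsStaircase.partitionCount_eq {P Q : ℕ → Set (Multiset ℕ)} (hP : IsStaircase P)
    (hQ : IsStaircase Q) (k : ℕ) (z : ℤ) : partitionCount (P k) z = partitionCount (Q k) z := by
  suffices ∀ (b k : ℕ) (z : ℤ), z < b → partitionCount (P k) z = partitionCount (Q k) z from
    this (z.toNat + 1) k z (by omega)
  intro b
  induction b with
  | zero =>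
    intro k z hz
    rw [partitionCount_of_neg _ hz, partitionCount_of_neg _ hz]
  | succ b ih =>
    intro k z hz
    have hPk := partitionCount_add_compl (P k) z
    have hQk := partitionCount_add_compl (Q k) z
    rw [hP] at hPk
    rw [hQ] at hQk
    have := ih (k + 1) (z - (k + 1 : ℕ)) (by omega)
    omega

end PartitionCount

section Mex

/-- The least integer above `k` that does not occur in `s`; for `k = 0` this is the mex. -/
noncomputable def mexAbove (k : ℕ) (s : Multiset ℕ) : ℕ := sInf {i | k < i ∧ i ∉ s}

theorem mexAbove_of_notMem {k : ℕ} {s : Multiset ℕ} (h : k + 1 ∉ s) : mexAbove k s = k + 1 :=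
  IsLeast.csInf_eq ⟨⟨k.lt_succ_self, h⟩, fun _ hi => hi.1⟩

theorem mexAbove_cons_succ (k : ℕ) (s : Multiset ℕ) :
    mexAbove k ((k + 1) ::ₘ s) = mexAbove (k + 1) s := by
  unfold mexAbove
  congr 1
  ext i
  simp only [Set.mem_ofPred_eq, mem_cons]
  grind

theorem isStaircase_odd_mexAbove : IsStaircase fun k => {s | Odd (mexAbove k s + k)} := by
  intro k z
  have parity (s : Multiset ℕ) :
      ¬Odd (mexAbove k ((k + 1) ::ₘ s) + k) ↔ Odd (mexAbove (k + 1) s + (k + 1)) := by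
    rw [mexAbove_cons_succ, ← add_assoc, Nat.odd_add_one]
  refine partitionCount_eq_of_bijOn (f := cons (k + 1)) (g := id) ⟨fun s hs => (parity s).2 hs,
    fun _ _ _ _ => (cons_inj_right _).1, fun s hs => ?_⟩ (Set.bijOn_id _) (k + 1) ?_ ?_ z
  · have hmem : k + 1 ∈ s := by
      by_contra h
      exact hs (by rw [Set.mem_ofPred_eq, mexAbove_of_notMem h]; exact ⟨k, by ring⟩)
    obtain ⟨t, rfl⟩ := exists_cons_of_mem hmem
    exact ⟨t, (parity t).1 hs, rfl⟩
  · intro s _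
    rw [sum_cons, id, add_comm]
  · simp

end Mex

section Durfee

theorem countP_lt_le_countP_lt (s : Multiset ℕ) {a b : ℕ} (hab : a ≤ b) :
    s.countP (b < ·) ≤ s.countP (a < ·) := by
  simp only [countP_eq_card_filter]
  exact card_le_card (monotone_filter_right s fun x hx => hab.trans_lt hx)

theorem countP_lt_eq_count_add (s : Multiset ℕ) (a : ℕ) :
    s.countP (a < ·) = s.count (a + 1) + s.countP (a + 1 < ·) := by
  induction s using Multiset.induction_on with
  | empty => simp
  | cons b s ih =>
    simp only [countP_cons, count_cons, ih]
    split_ifs <;> omega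

/-- The largest `d` such that at least `d` elements of `s` exceed `d + k`: the height of the largest
`d × (d + k + 1)` rectangle in the Young diagram of `s`. -/
def durfee (k : ℕ) (s : Multiset ℕ) : ℕ :=
  Nat.findGreatest (fun d => d ≤ s.countP (d + k < ·)) s.card

theorem le_durfee_iff {k e : ℕ} {s : Multiset ℕ} :
    e ≤ durfee k s ↔ e ≤ s.countP (e + k < ·) := by
  refine ⟨fun h => ?_, fun h => Nat.le_findGreatest (h.trans (countP_le_card _ s)) h⟩
  calc e ≤ durfee k s := h
    _ ≤ s.countP (durfee k s + k < ·) :=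
      Nat.findGreatest_spec (P := fun d => d ≤ s.countP (d + k < ·)) (Nat.zero_le _) (Nat.zero_le _)
    _ ≤ s.countP (e + k < ·) := countP_lt_le_countP_lt s (by omega)

theorem durfee_le_countP (k : ℕ) (s : Multiset ℕ) :
    durfee k s ≤ s.countP (durfee k s + k < ·) :=
  le_durfee_iff.1 le_rfl

theorem countP_le_durfee (k : ℕ) (s : Multiset ℕ) :
    s.countP (durfee k s + k + 1 < ·) ≤ durfee k s := by
  by_contra! h
  have : durfee k s + 1 ≤ durfee k s := le_durfee_iff.2 (by rwa [add_right_comm])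
  omega

theorem durfee_eq_of_le {k d : ℕ} {s : Multiset ℕ} (hle : d ≤ s.countP (d + k < ·))
    (hge : s.countP (d + k + 1 < ·) ≤ d) : durfee k s = d := by
  refine le_antisymm ?_ (le_durfee_iff.2 hle)
  by_contra! h
  have : d + 1 ≤ s.countP (d + 1 + k < ·) := le_durfee_iff.1 h
  rw [add_right_comm] at this
  omega

theorem durfee_add_of_le {k : ℕ} {s t : Multiset ℕ} (ht : ∀ x ∈ t, x ≤ durfee k s + k + 1) :
    durfee k (s + t) = durfee k s := by
  refine durfee_eq_of_le ?_ ?_ <;> rw [countP_add]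
  · exact (durfee_le_countP k s).trans (Nat.le_add_right _ _)
  · rw [countP_eq_zero.2 fun x hx => (ht x hx).not_gt]
    exact countP_le_durfee k s

/-- Listing `s` as `s₁ ≥ s₂ ≥ ⋯`, there is no `i` with `sᵢ = i + k`. The only possible such `i` is
`durfee k s + 1`, and it is one exactly when more than `durfee k s` elements exceed
`durfee k s + k`. -/
def NoFixedPoint (k : ℕ) (s : Multiset ℕ) : Prop :=
  s.countP (durfee k s + k < ·) = durfee k s

theorem durfee_eq_of_countP_eq {k d : ℕ} {s : Multiset ℕ} (h : s.countP (d + k < ·) = d) :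
    durfee k s = d :=
  durfee_eq_of_le h.ge ((countP_lt_le_countP_lt s (Nat.le_succ _)).trans h.le)

theorem noFixedPoint_of_countP_eq {k d : ℕ} {s : Multiset ℕ} (h : s.countP (d + k < ·) = d) :
    NoFixedPoint k s := by
  rwa [NoFixedPoint, durfee_eq_of_countP_eq h]

theorem noFixedPoint_add_iff {k : ℕ} {s t : Multiset ℕ} (ht : ∀ x ∈ t, x ≤ durfee k s + k + 1) :
    NoFixedPoint k (s + t) ↔ NoFixedPoint k s ∧ durfee k s + k + 1 ∉ t := by
  have hsmall : t.countP (durfee k s + k < ·) = 0 ↔ durfee k s + k + 1 ∉ t := by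
    rw [countP_eq_zero]
    grind
  have := durfee_le_countP k s
  rw [NoFixedPoint, NoFixedPoint, durfee_add_of_le ht, countP_add, ← hsmall]
  omega

theorem exists_noFixedPoint_add_replicate (k : ℕ) (s : Multiset ℕ) :
    ∃ t q, NoFixedPoint k t ∧ s = t + replicate q (durfee k t + k + 1) := by
  set d := durfee k s
  have hexcess : s.countP (d + k < ·) - d ≤ s.count (d + k + 1) := by
    have := countP_lt_eq_count_add s (d + k)
    have : s.countP (d + k + 1 < ·) ≤ d := countP_le_durfee k s
    omega
  obtain ⟨t, ht⟩ := le_iff_exists_add'.1 (le_count_iff_replicate_le.1 hexcess)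
  have hcount : t.countP (d + k < ·) = d := by
    have hadd := congrArg (countP (d + k < ·)) ht
    rw [countP_add, countP_eq_card (s := replicate _ _) |>.2 fun x hx => by
      rw [eq_of_mem_replicate hx]; omega, card_replicate] at hadd
    have : d ≤ s.countP (d + k < ·) := durfee_le_countP k s
    omega
  exact ⟨t, _, noFixedPoint_of_countP_eq hcount, by rwa [durfee_eq_of_countP_eq hcount]⟩

end Durfee

section DurfeeSplit

theorem sort_add_of_forall_le {α : Type*} [LinearOrder α] {s t : Multiset α}
    (h : ∀ a ∈ s, ∀ b ∈ t, b ≤ a) : (s + t).sort (· ≥ ·) = s.sort (· ≥ ·) ++ t.sort (· ≥ ·) := by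
  refine List.Perm.eq_of_pairwise' (r := (· ≥ ·)) (pairwise_sort _ _)
    (List.pairwise_append.2 ⟨pairwise_sort _ _, pairwise_sort _ _, by simpa using h⟩) ?_
  rw [← coe_eq_coe, ← coe_add]
  simp only [sort_eq]

theorem add_inj_of_forall_le {α : Type*} [LinearOrder α] {s t s' t' : Multiset α}
    (h : ∀ a ∈ s, ∀ b ∈ t, b ≤ a) (h' : ∀ a ∈ s', ∀ b ∈ t', b ≤ a) (hcard : s.card = s'.card) :
    s + t = s' + t' ↔ s = s' ∧ t = t' := by
  refine ⟨fun heq => ?_, fun ⟨hs, ht⟩ => by rw [hs, ht]⟩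
  have happend : s.sort (· ≥ ·) ++ t.sort (· ≥ ·) = s'.sort (· ≥ ·) ++ t'.sort (· ≥ ·) := by
    rw [← sort_add_of_forall_le h, ← sort_add_of_forall_le h', heq]
  have hs : s = s' := by
    simpa using congrArg ((↑) : List α → Multiset α)
      (List.append_inj_left happend (by simpa using hcard))
  exact ⟨hs, by rwa [hs, add_right_inj] at heq⟩

/-- The cut of the Young diagram of `s + t` along the bottom of its `d × (d + k + 1)` rectangle,
`d = durfee k (s + t)`: `s` holds the `d` rows meeting the rectangle and `t` the rows below it. -/
structure IsDurfeeSplit (k : ℕ) (s t : Multiset ℕ) : Prop where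
  lt_of_mem_left : ∀ a ∈ s, s.card + k < a
  le_of_mem_right : ∀ b ∈ t, b ≤ s.card + k + 1

theorem exists_isDurfeeSplit (k : ℕ) (u : Multiset ℕ) :
    ∃ s t, IsDurfeeSplit k s t ∧ u = s + t := by
  obtain ⟨v, q, hv, rfl⟩ := exists_noFixedPoint_add_replicate k u
  have hcard : (v.filter (durfee k v + k < ·)).card = durfee k v := by
    rw [← countP_eq_card_filter, hv]
  refine ⟨v.filter (durfee k v + k < ·),
    v.filter (¬durfee k v + k < ·) + replicate q (durfee k v + k + 1), ⟨?_, ?_⟩, ?_⟩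
  · rw [hcard]
    exact fun a ha => of_mem_filter ha
  · rw [hcard]
    intro b hb
    rcases mem_add.1 hb with hb | hb
    · have := of_mem_filter hb
      omega
    · exact (eq_of_mem_replicate hb).le
  · rw [← add_assoc, filter_add_not]

namespace IsDurfeeSplit

variable {k : ℕ} {s t s' t' : Multiset ℕ}

theorem le (h : IsDurfeeSplit k s t) : ∀ a ∈ s, ∀ b ∈ t, b ≤ a :=
  fun a ha b hb => (h.le_of_mem_right b hb).trans (h.lt_of_mem_left a ha)

theorem countP_left (h : IsDurfeeSplit k s t) : s.countP (s.card + k < ·) = s.card :=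
  countP_eq_card.2 h.lt_of_mem_left

theorem durfee_add (h : IsDurfeeSplit k s t) : durfee k (s + t) = s.card := by
  have hs := durfee_eq_of_countP_eq h.countP_left
  rw [durfee_add_of_le (by rw [hs]; exact h.le_of_mem_right), hs]

theorem noFixedPoint_iff (h : IsDurfeeSplit k s t) :
    NoFixedPoint k (s + t) ↔ s.card + k + 1 ∉ t := by
  have hs := durfee_eq_of_countP_eq h.countP_left
  rw [noFixedPoint_add_iff (by rw [hs]; exact h.le_of_mem_right), hs]
  exact and_iff_right (noFixedPoint_of_countP_eq h.countP_left)

theorem add_inj (h : IsDurfeeSplit k s t) (h' : IsDurfeeSplit k s' t') :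
    s + t = s' + t' ↔ s = s' ∧ t = t' := by
  refine ⟨fun heq => ?_, fun ⟨hs, ht⟩ => by rw [hs, ht]⟩
  have hcard : s.card = s'.card := by rw [← h.durfee_add, ← h'.durfee_add, heq]
  exact (add_inj_of_forall_le h.le h'.le hcard).1 heq

theorem cons_iff : IsDurfeeSplit k s ((s.card + k + 1) ::ₘ t) ↔ IsDurfeeSplit k s t :=
  ⟨fun h => ⟨h.lt_of_mem_left, fun b hb => h.le_of_mem_right b (mem_cons_of_mem hb)⟩,
    fun h => ⟨h.lt_of_mem_left, forall_mem_cons.2 ⟨le_rfl, h.le_of_mem_right⟩⟩⟩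

theorem map_succ_iff : IsDurfeeSplit (k + 1) (s.map Nat.succ) t ∧ s.card + (k + 1) + 1 ∉ t ↔
    IsDurfeeSplit k s t := by
  refine ⟨fun ⟨h, hmem⟩ => ⟨fun a ha => ?_, fun b hb => ?_⟩, fun h => ⟨⟨?_, fun b hb => ?_⟩, ?_⟩⟩
  · have := h.lt_of_mem_left _ (mem_map_of_mem Nat.succ ha)
    rw [card_map] at this
    omega
  · have := h.le_of_mem_right b hb
    rw [card_map] at this
    have : b ≠ s.card + (k + 1) + 1 := fun hb' => hmem (hb' ▸ hb)
    omega
  · simp only [mem_map, card_map]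
    rintro _ ⟨a, ha, rfl⟩
    have := h.lt_of_mem_left a ha
    omega
  · have := h.le_of_mem_right b hb
    rw [card_map]
    omega
  · intro hmem
    have := h.le_of_mem_right _ hmem
    omega

end IsDurfeeSplit

theorem bijOn_insert_fixedPoint (k : ℕ) :
    Set.BijOn (fun p : Multiset ℕ × Multiset ℕ => p.1 + (p.1.card + k + 1) ::ₘ p.2)
      {p | IsDurfeeSplit k p.1 p.2} {u | NoFixedPoint k u}ᶜ := by
  refine ⟨fun ⟨s, t⟩ h => ?_, fun ⟨s, t⟩ h ⟨s', t'⟩ h' heq => ?_, fun u hu => ?_⟩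
  · have h' := IsDurfeeSplit.cons_iff.2 h
    exact fun hfix => h'.noFixedPoint_iff.1 hfix (mem_cons_self _ _)
  · obtain ⟨hs, ht⟩ := (IsDurfeeSplit.add_inj (IsDurfeeSplit.cons_iff.2 h)
      (IsDurfeeSplit.cons_iff.2 h')).1 heq
    dsimp only at hs ht
    subst hs
    rw [(cons_inj_right _).1 ht]
  · obtain ⟨s, t, h, rfl⟩ := exists_isDurfeeSplit k u
    obtain ⟨t, rfl⟩ := exists_cons_of_mem (not_not.1 (mt h.noFixedPoint_iff.2 hu))
    exact ⟨(s, t), IsDurfeeSplit.cons_iff.1 h, rfl⟩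

theorem bijOn_map_succ_add (k : ℕ) :
    Set.BijOn (fun p : Multiset ℕ × Multiset ℕ => p.1.map Nat.succ + p.2)
      {p | IsDurfeeSplit k p.1 p.2} {u | NoFixedPoint (k + 1) u} := by
  refine ⟨fun ⟨s, t⟩ h => ?_, fun ⟨s, t⟩ h ⟨s', t'⟩ h' heq => ?_, fun u hu => ?_⟩
  · obtain ⟨h', hmem⟩ := IsDurfeeSplit.map_succ_iff.2 h
    exact h'.noFixedPoint_iff.2 (by rwa [card_map])
  · obtain ⟨hs, ht⟩ := (IsDurfeeSplit.add_inj (IsDurfeeSplit.map_succ_iff.2 h).1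
      (IsDurfeeSplit.map_succ_iff.2 h').1).1 heq
    exact Prod.ext (map_injective Nat.succ_injective hs) ht
  · obtain ⟨r, t, h, rfl⟩ := exists_isDurfeeSplit (k + 1) u
    have hr : (r.map Nat.pred).map Nat.succ = r := by
      rw [map_map, map_congr rfl fun a ha => ?_, map_id]
      exact Nat.succ_pred (Nat.ne_zero_of_lt (h.lt_of_mem_left a ha))
    refine ⟨(r.map Nat.pred, t), IsDurfeeSplit.map_succ_iff.1 ⟨by rwa [hr], ?_⟩, by simp only [hr]⟩
    rw [card_map]
    exact h.noFixedPoint_iff.1 hu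

theorem isStaircase_noFixedPoint : IsStaircase fun k => {s | NoFixedPoint k s} := by
  refine fun k => partitionCount_eq_of_bijOn (bijOn_insert_fixedPoint k) (bijOn_map_succ_add k)
    (k + 1) ?_ ?_
  · rintro ⟨s, t⟩ -
    simp only [sum_add, sum_cons, Nat.succ_eq_add_one, sum_map_add, map_id', map_const',
      sum_replicate, smul_eq_mul, mul_one]
    ring
  · rintro ⟨s, t⟩ h
    have hzero : 0 ∉ s := fun h0 => absurd (h.lt_of_mem_left 0 h0) (Nat.not_lt_zero _)
    simp [hzero]

end DurfeeSplit

section Crank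

theorem add_replicate_inj {α : Type*} {a : α} {s t : Multiset α} {m n : ℕ} (hs : a ∉ s)
    (ht : a ∉ t) : s + replicate m a = t + replicate n a ↔ s = t ∧ m = n := by
  classical
  refine ⟨fun h => ?_, fun ⟨hst, hmn⟩ => by rw [hst, hmn]⟩
  have hmn : m = n := by
    simpa [count_eq_zero_of_notMem hs, count_eq_zero_of_notMem ht] using congrArg (count a) h
  exact ⟨by rwa [hmn, add_left_inj] at h, hmn⟩

theorem exists_eq_add_replicate {α : Type*} (a : α) (s : Multiset α) :
    ∃ t n, a ∉ t ∧ s = t + replicate n a := by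
  classical
  refine ⟨s.filter (a ≠ ·), s.count a, by simp, ?_⟩
  rw [← filter_eq s a, add_comm, filter_add_not]

theorem neg_le_partitionCrank_iff {n : ℕ} (k : ℕ) (π : n.Partition) :
    -(k : ℤ) ≤ partitionCrank π ↔ π.parts.count 1 ≤ durfee k π.parts + k := by
  have hdurfee : π.parts.count 1 ≤ durfee k π.parts + k ↔
      π.parts.count 1 ≤ π.parts.countP (π.parts.count 1 < ·) + k := by
    rw [← Nat.sub_le_iff_le_add, ← Nat.sub_le_iff_le_add, le_durfee_iff]
    rcases le_total (π.parts.count 1) k with h | h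
    · simp [Nat.sub_eq_zero_of_le h]
    · rw [Nat.sub_add_cancel h]
  rw [hdurfee, partitionCrank, partitionEta, partitionOmega, countP_eq_card_filter]
  split_ifs <;> omega

/-- The data `(s, q, w)` common to the two sides of the trade of ones for parts `D + 1`, where
`D = durfee k s + k`: a multiset `s` without ones, to which one may add either `q * (D + 1) + w`
ones, or `q` parts `D + 1` and `w` ones. If `D = 0` the two kinds of parts agree, and `q` must
vanish. -/
structure IsOnesTrade (k : ℕ) (s : Multiset ℕ) (q w : ℕ) : Prop where
  one_notMem : 1 ∉ s
  noFixedPoint : NoFixedPoint k s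
  le : w ≤ durfee k s + k
  eq_zero : durfee k s + k = 0 → q = 0

theorem durfee_add_replicate_one (k m : ℕ) (s : Multiset ℕ) :
    durfee k (s + replicate m 1) = durfee k s :=
  durfee_add_of_le fun x hx => by rw [eq_of_mem_replicate hx]; omega

theorem noFixedPoint_add_replicate_one_iff {k m : ℕ} {s : Multiset ℕ} :
    NoFixedPoint k (s + replicate m 1) ↔ NoFixedPoint k s ∧ (durfee k s + k = 0 → m = 0) := by
  rw [noFixedPoint_add_iff fun x hx => by rw [eq_of_mem_replicate hx]; omega, mem_replicate]
  grind

theorem durfee_add_replicate_succ (k q : ℕ) (s : Multiset ℕ) :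
    durfee k (s + replicate q (durfee k s + k + 1)) = durfee k s :=
  durfee_add_of_le fun _ hx => (eq_of_mem_replicate hx).le

theorem durfee_add_replicate_succ_add_replicate_one (k q w : ℕ) (s : Multiset ℕ) :
    durfee k (s + replicate q (durfee k s + k + 1) + replicate w 1) = durfee k s := by
  rw [durfee_add_replicate_one, durfee_add_replicate_succ]

theorem mul_succ_add_inj_of_le {D q w q' w' : ℕ} (hw : w ≤ D) (hw' : w' ≤ D) :
    q * (D + 1) + w = q' * (D + 1) + w' ↔ q = q' ∧ w = w' := by
  refine ⟨fun h => ?_, fun ⟨hq, hw⟩ => by rw [hq, hw]⟩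
  have hmod := congrArg (· % (D + 1)) h
  simp only [Nat.mul_add_mod_self_right, Nat.mod_eq_of_lt (Nat.lt_succ_of_le hw),
    Nat.mod_eq_of_lt (Nat.lt_succ_of_le hw')] at hmod
  rw [hmod, add_left_inj] at h
  exact ⟨Nat.eq_of_mul_eq_mul_right D.succ_pos h, hmod⟩

theorem bijOn_add_ones (k : ℕ) :
    Set.BijOn (fun (s, q, w) => s + replicate (q * (durfee k s + k + 1) + w) 1)
      {(s, q, w) | IsOnesTrade k s q w} {s | NoFixedPoint k s} := by
  refine ⟨fun ⟨s, q, w⟩ h => ?_, fun ⟨s, q, w⟩ h ⟨s', q', w'⟩ h' heq => ?_, fun u hu => ?_⟩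
  · refine noFixedPoint_add_replicate_one_iff.2 ⟨h.noFixedPoint, fun h0 => ?_⟩
    have hw : w = 0 := Nat.le_zero.1 (h.le.trans h0.le)
    rw [h.eq_zero h0, hw, zero_mul]
  · obtain ⟨rfl, hqw⟩ := (add_replicate_inj h.one_notMem h'.one_notMem).1 heq
    obtain ⟨rfl, rfl⟩ := (mul_succ_add_inj_of_le h.le h'.le).1 hqw
    rfl
  · obtain ⟨s, v, hs, rfl⟩ := exists_eq_add_replicate 1 u
    obtain ⟨hfix, hv⟩ := noFixedPoint_add_replicate_one_iff.1 hu
    refine ⟨(s, v / (durfee k s + k + 1), v % (durfee k s + k + 1)), ⟨hs, hfix,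
      Nat.lt_succ_iff.1 (Nat.mod_lt _ (Nat.succ_pos _)), fun h0 => by simp [hv h0]⟩, ?_⟩
    simp only [Nat.div_add_mod']

namespace IsOnesTrade

variable {k q w : ℕ} {s : Multiset ℕ}

theorem count_one_traded (h : IsOnesTrade k s q w) :
    (s + replicate q (durfee k s + k + 1) + replicate w 1).count 1 = w := by
  have hq : (replicate q (durfee k s + k + 1)).count 1 = 0 := by
    rw [count_eq_zero, mem_replicate]
    have := h.eq_zero
    omega
  rw [count_add, count_add, count_eq_zero_of_notMem h.one_notMem, hq, count_replicate_self]
  omega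

theorem countP_traded (h : IsOnesTrade k s q w) :
    (s + replicate q (durfee k s + k + 1) + replicate w 1).countP (durfee k s + k < ·) =
      durfee k s + q := by
  have hq : (replicate q (durfee k s + k + 1)).countP (durfee k s + k < ·) = q := by
    rw [countP_eq_card.2 fun x hx => by rw [eq_of_mem_replicate hx]; omega, card_replicate]
  have hw : (replicate w 1).countP (durfee k s + k < ·) = 0 := by
    refine countP_eq_zero.2 fun x hx => ?_
    have := mem_replicate.1 hx
    have := h.le
    omega
  rw [countP_add, countP_add, h.noFixedPoint, hq, hw, add_zero]

end IsOnesTrade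

theorem bijOn_add_traded_ones (k : ℕ) :
    Set.BijOn (fun (s, q, w) => s + replicate q (durfee k s + k + 1) + replicate w 1)
      {(s, q, w) | IsOnesTrade k s q w} {s | s.count 1 ≤ durfee k s + k} := by
  refine ⟨fun ⟨s, q, w⟩ h => ?_, fun ⟨s, q, w⟩ h ⟨s', q', w'⟩ h' heq => ?_, fun u hu => ?_⟩
  · rw [Set.mem_ofPred_eq, h.count_one_traded, durfee_add_replicate_succ_add_replicate_one]
    exact h.le
  · dsimp only at heq
    have hd : durfee k s = durfee k s' := by
      rw [← durfee_add_replicate_succ_add_replicate_one k q w s, heq,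
        durfee_add_replicate_succ_add_replicate_one]
    have hw : w = w' := by rw [← h.count_one_traded, heq, h'.count_one_traded]
    have hq : q = q' := by
      have hcount := h.countP_traded
      rw [heq, hd, h'.countP_traded] at hcount
      exact (add_left_cancel hcount).symm
    rw [hd, hq, hw, add_left_inj, add_left_inj] at heq
    rw [heq, hq, hw]
  · obtain ⟨v, q, hv, rfl⟩ := exists_noFixedPoint_add_replicate k u
    obtain ⟨s, w, hs, rfl⟩ := exists_eq_add_replicate 1 v
    rw [Set.mem_ofPred_eq, durfee_add_replicate_succ, durfee_add_replicate_one, count_add,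
      count_add, count_replicate_self] at hu
    have hfix := (noFixedPoint_add_replicate_one_iff.1 hv).1
    refine ⟨(s, q, w), ⟨hs, hfix, by omega, fun h0 => ?_⟩, ?_⟩
    · rw [h0, zero_add, count_replicate_self] at hu
      omega
    · rw [durfee_add_replicate_one]
      exact add_right_comm _ _ _

theorem partitionCount_noFixedPoint (k : ℕ) (z : ℤ) :
    partitionCount {s | NoFixedPoint k s} z =
      partitionCount {s | s.count 1 ≤ durfee k s + k} z := by
  convert partitionCount_eq_of_bijOn (bijOn_add_ones k) (bijOn_add_traded_ones k) 0 ?_ ?_ z using 2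
  · simp
  · rintro ⟨s, q, w⟩ -
    simp [add_assoc]
  · rintro ⟨s, q, w⟩ -
    simp [mem_replicate]

end Crank

theorem crank_mex_general (n k : ℕ) :
    (Finset.univ.filter (fun π : n.Partition => -(k : ℤ) ≤ partitionCrank π)).card =
    (Finset.univ.filter (fun π : n.Partition => Odd (mexAbove k π.parts + k))).card := by
  simp only [neg_le_partitionCrank_iff]
  calc (Finset.univ.filter fun π : n.Partition => π.parts.count 1 ≤ durfee k π.parts + k).card
    _ = partitionCount {s | s.count 1 ≤ durfee k s + k} n :=
      card_filter_parts n fun s => s.count 1 ≤ durfee k s + k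
    _ = partitionCount {s | NoFixedPoint k s} n := (partitionCount_noFixedPoint k n).symm
    _ = partitionCount {s | Odd (mexAbove k s + k)} n :=
      isStaircase_noFixedPoint.partitionCount_eq isStaircase_odd_mexAbove k n
    _ = _ := (card_filter_parts n fun s => Odd (mexAbove k s + k)).symm

theorem crank_mex (n : ℕ) (hn : 0 < n) :
    (Finset.univ.filter (fun π : n.Partition => 0 ≤ partitionCrank π)).card =
    (Finset.univ.filter (fun π : n.Partition => Odd (partitionMex π))).card :=
  crank_mex_general n 0
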